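/- Let F : Fin 4 → Fin 4 → ℝ be antisymmetric (F_{ab} = −F_{ba}) on 4-dimensional Minkowski space. Define ψ = (1/2) F_{ab} F^{ab}, the energy-momentum tensor T_{ab} = F_{ar} F^{r}{}_{b} + (1/2) ψ η_{ab}, and the Hodge dual ⋆F_{ab} = (1/2) ε_{ab}{}^{pq} F_{pq}. Then for all a,b,c,d: (⋆F)_{ab} (⋆F)^{cd} + F_{ab} F^{cd} = −(δ^{c}_{a} T^{d}{}_{b} − δ^{d}_{a} T^{c}{}_{b} − δ^{c}_{b} T^{d}{}_{a} + δ^{d}_{b} T^{c}{}_{a}). -/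

import Mathlib

noncomputable section

/-- The Minkowski metric `η = diag(+1,−1,−1,−1)` on `ℝ⁴`.  Its inverse has the
same components, so `mink` is also used to raise indices. -/
def mink : Fin 4 → Fin 4 → ℝ :=
  fun a b => if a = b then (if a = 0 then 1 else -1) else 0

/-- The totally antisymmetric Levi-Civita tensor with all indices down and
`ε₀₁₂₃ = +1`, via the Vandermonde-product formula. -/
def lev : Fin 4 → Fin 4 → Fin 4 → Fin 4 → ℝ :=
  fun a b c d =>
    (((b : ℕ) : ℝ) - ((a : ℕ) : ℝ)) * (((c : ℕ) : ℝ) - ((a : ℕ) : ℝ)) *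
    (((d : ℕ) : ℝ) - ((a : ℕ) : ℝ)) * (((c : ℕ) : ℝ) - ((b : ℕ) : ℝ)) *
    (((d : ℕ) : ℝ) - ((b : ℕ) : ℝ)) * (((d : ℕ) : ℝ) - ((c : ℕ) : ℝ)) / 12

/-- `ε_{ab}{}^{pq}`: the Levi-Civita tensor with its last two indices raised
by the Minkowski metric. -/
def levUp (a b p q : Fin 4) : ℝ := ∑ r, ∑ s, mink p r * mink q s * lev a b r s

/-- The Kronecker delta on `Fin 4`. -/
def kd (a b : Fin 4) : ℝ := if a = b then 1 else 0

/-- Hodge dual `⋆F_{ab} = (1/2) ε_{ab}{}^{pq} F_{pq}` of a rank-2 tensor. -/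
def hodge2 (F : Fin 4 → Fin 4 → ℝ) (a b : Fin 4) : ℝ :=
  (1/2) * ∑ p, ∑ q, levUp a b p q * F p q

/-- Rank-2 tensor with both indices raised by the Minkowski metric. -/
def up2 (F : Fin 4 → Fin 4 → ℝ) (a b : Fin 4) : ℝ :=
  ∑ p, ∑ q, mink a p * mink b q * F p q

/-- The invariant `ψ = (1/2) F_{ab} F^{ab}`. -/
def emPsi (F : Fin 4 → Fin 4 → ℝ) : ℝ := (1/2) * ∑ a, ∑ b, F a b * up2 F a b

/-- The energy-momentum tensor `T_{ab} = F_{ar} F^{r}{}_{b} + (1/2) ψ η_{ab}`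
of the electromagnetic field. -/
def emT (F : Fin 4 → Fin 4 → ℝ) (a b : Fin 4) : ℝ :=
  (∑ r, ∑ p, F a r * mink r p * F p b) + (1/2) * emPsi F * mink a b

/-- The sign `η_{aa}` of a diagonal entry of the Minkowski metric. -/
def minkSign (a : Fin 4) : ℝ := if a = 0 then 1 else -1

lemma sum_mink_mul (a : Fin 4) (f : Fin 4 → ℝ) :
    ∑ p, mink a p * f p = minkSign a * f a := by
  simp [mink, minkSign]

lemma up2_eq (F : Fin 4 → Fin 4 → ℝ) (a b : Fin 4) :
    up2 F a b = minkSign a * minkSign b * F a b := by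
  simp only [up2, mul_assoc, ← Finset.mul_sum, sum_mink_mul]

lemma levUp_eq (a b p q : Fin 4) :
    levUp a b p q = minkSign p * minkSign q * lev a b p q :=
  up2_eq (lev a b) p q

lemma emT_eq (F : Fin 4 → Fin 4 → ℝ) (a b : Fin 4) :
    emT F a b = ∑ r, F a r * (minkSign r * F r b) + (1/2) * emPsi F * mink a b := by
  simp only [emT, mul_assoc, ← Finset.mul_sum, sum_mink_mul]

/-- An antisymmetric tensor is determined by its six components above the diagonal. -/
lemma eq_of_antisymm (F : Fin 4 → Fin 4 → ℝ) (hF : ∀ a b, F a b = -F b a) :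
    F = ![![0, F 0 1, F 0 2, F 0 3], ![-F 0 1, 0, F 1 2, F 1 3],
      ![-F 0 2, -F 1 2, 0, F 2 3], ![-F 0 3, -F 1 3, -F 2 3, 0]] := by
  have diag (a : Fin 4) : F a a = 0 := by linarith [hF a a]
  ext a b
  fin_cases a <;> fin_cases b <;> simp [diag] <;> exact hF _ _

/-- The Hodge dual of an antisymmetric tensor, in components. -/
lemma hodge2_components (x y z u v w : ℝ) :
    hodge2 ![![0, x, y, z], ![-x, 0, u, v], ![-y, -u, 0, w], ![-z, -v, -w, 0]] =
      ![![0, w, -v, u], ![-w, 0, -z, y], ![v, z, 0, -x], ![-u, -y, x, 0]] := by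
  ext a b
  fin_cases a <;> fin_cases b <;>
    simp [hodge2, levUp_eq, lev, minkSign, Fin.sum_univ_four] <;> ring

/-- The invariant `ψ` of an antisymmetric tensor, in components. -/
lemma emPsi_components (x y z u v w : ℝ) :
    emPsi ![![0, x, y, z], ![-x, 0, u, v], ![-y, -u, 0, w], ![-z, -v, -w, 0]] =
      u ^ 2 + v ^ 2 + w ^ 2 - x ^ 2 - y ^ 2 - z ^ 2 := by
  simp [emPsi, up2_eq, minkSign, Fin.sum_univ_four]
  ring

/-- The energy-momentum tensor of an antisymmetric tensor, in components. -/
lemma emT_components (x y z u v w : ℝ) :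
    emT ![![0, x, y, z], ![-x, 0, u, v], ![-y, -u, 0, w], ![-z, -v, -w, 0]] =
      ![![(x ^ 2 + y ^ 2 + z ^ 2 + u ^ 2 + v ^ 2 + w ^ 2) / 2,
          y * u + z * v, z * w - x * u, -x * v - y * w],
        ![y * u + z * v, (y ^ 2 + z ^ 2 + u ^ 2 + v ^ 2 - x ^ 2 - w ^ 2) / 2,
          v * w - x * y, -x * z - u * w],
        ![z * w - x * u, v * w - x * y,
          (x ^ 2 + z ^ 2 + u ^ 2 + w ^ 2 - y ^ 2 - v ^ 2) / 2, u * v - y * z],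
        ![-x * v - y * w, -x * z - u * w, u * v - y * z,
          (x ^ 2 + y ^ 2 + v ^ 2 + w ^ 2 - z ^ 2 - u ^ 2) / 2]] := by
  ext a b
  fin_cases a <;> fin_cases b <;>
    simp [emT_eq, emPsi_components, mink, minkSign, Fin.sum_univ_four] <;> ring

set_option maxHeartbeats 1000000 in
/-- Electromagnetic quadratic identity:
`(⋆F)_{ab} (⋆F)^{cd} + F_{ab} F^{cd}
  = −(δ^{c}_{a} T^{d}{}_{b} − δ^{d}_{a} T^{c}{}_{b} − δ^{c}_{b} T^{d}{}_{a} + δ^{d}_{b} T^{c}{}_{a})`. -/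
theorem electromagnetic_quadratic_identity (F : Fin 4 → Fin 4 → ℝ)
    (hF : ∀ a b, F a b = -F b a) :
    ∀ a b c d,
      hodge2 F a b * up2 (hodge2 F) c d + F a b * up2 F c d =
        -(kd c a * (∑ p, mink d p * emT F p b) -
          kd d a * (∑ p, mink c p * emT F p b) -
          kd c b * (∑ p, mink d p * emT F p a) +
          kd d b * (∑ p, mink c p * emT F p a)) := by
  rw [eq_of_antisymm F hF]
  generalize F 0 1 = x, F 0 2 = y, F 0 3 = z, F 1 2 = u, F 1 3 = v, F 2 3 = w
  intro a b c d
  simp only [hodge2_components, up2_eq, sum_mink_mul, emT_components]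
  fin_cases a <;> fin_cases b <;> fin_cases c <;> fin_cases d <;>
    simp [kd, minkSign] <;> ring
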